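/- Let m ≥ 2, and let X be a random variable on a product Ω of m probability spaces that is strongly difference-bounded by (b, c, ς) with b ≤ m, c = A·sqrt(m log m) for a constant A ≥ 1, and ς ≤ 1/m³. Then there is a constant C (depending only on A) such that P(|X − E[X]| > C·m·log m) ≤ 4/m. -/

import Mathlib

open MeasureTheory

universe u
theorem tail_aux (b c α l : ℝ) (hb : 0 ≤ b) (hc : 0 ≤ c) (hα : 0 < α) (hl : 0 ≤ l) (M : ℝ) :
    ∀ (n : ℕ) (Ω : Fin n → Type u) [∀ i, MeasurableSpace (Ω i)]
      (μ : ∀ i, Measure (Ω i)) [∀ i, IsProbabilityMeasure (μ i)]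
      (X : (∀ i, Ω i) → ℝ) (_ : Measurable X) (_ : ∀ ω, |X ω| ≤ M)
      (B : Set (∀ i, Ω i)) (_ : MeasurableSet B)
      (_ : ∀ ω ω' : ∀ i, Ω i, (∃ k, ∀ j, j ≠ k → ω j = ω' j) → ω ∉ B → |X ω - X ω'| ≤ c)
      (_ : ∀ ω ω' : ∀ i, Ω i, (∃ k, ∀ j, j ≠ k → ω j = ω' j) → |X ω - X ω'| ≤ b) (t : ℝ),
      (Measure.pi μ).real {ω | t < X ω - ∫ x, X x ∂(Measure.pi μ)} ≤
        Real.exp (n * (l ^ 2 * (c + b * α) ^ 2 / 2) - l * t) + n * ((Measure.pi μ).real B / α) := by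
  intro n
  induction n with
  | zero =>
    intro Ω _ μ _ X hX hM B hB h1 h2 t
    have hX0 : ∀ ω, X ω = X (fun i => i.elim0) := fun ω => by congr 1; exact Subsingleton.elim _ _
    have hint : ∫ x, X x ∂(Measure.pi μ) = X (fun i => i.elim0) := by
      rw [integral_congr_ae (Filter.Eventually.of_forall hX0)]; simp
    rw [hint]
    by_cases ht : 0 ≤ t
    · have : {ω | t < X ω - X (fun i => i.elim0)} = ∅ := by
        ext ω; simp [hX0 ω, ht]
      rw [this]; simp; positivity
    · push Not at ht
      refine measureReal_le_one.trans ?_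
      have : 1 ≤ Real.exp (((0:ℕ):ℝ) * (l ^ 2 * (c + b * α) ^ 2 / 2) - l * t) := by
        apply Real.one_le_exp; simp; nlinarith
      simpa using this
  | succ n ih =>
    intro Ω _ μ _ X hX hM B hB h1 h2 t
    by_cases hBα : α ≤ (Measure.pi μ).real B
    · refine measureReal_le_one.trans ?_
      have h3 : 1 ≤ (Measure.pi μ).real B / α := by rwa [le_div_iff₀ hα, one_mul]
      have h4 : 0 ≤ Real.exp (((n+1:ℕ):ℝ) * (l ^ 2 * (c + b * α) ^ 2 / 2) - l * t) := by positivity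
      have h5 : (0:ℝ) ≤ n := by positivity
      push_cast at *
      nlinarith
    push Not at hBα
    have hmp := (measurePreserving_piFinSuccAbove μ 0).symm
    set e := (MeasurableEquiv.piFinSuccAbove Ω 0).symm with he
    set ν := Measure.pi (fun j => μ (Fin.succAbove 0 j)) with hν
    set E := ∫ x, X x ∂(Measure.pi μ) with hE
    have hXe : Measurable (fun p => X (e p)) := hX.comp e.measurable
    have hsec : ∀ x, Measurable (fun y => X (e (x, y))) := fun x =>
      hXe.comp measurable_prodMk_left
    have hBe : MeasurableSet (e ⁻¹' B) := e.measurable hB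
    have hdiff : ∀ x y y', (∃ k, ∀ j, j ≠ k → y j = y' j) →
        ∃ k, ∀ j, j ≠ k → (e (x, y)) j = (e (x, y')) j := by
      rintro x y y' ⟨k, hk⟩
      refine ⟨Fin.succ k, fun j hj => ?_⟩
      refine Fin.cases (fun _ => ?_) (fun j hj => ?_) j hj
      · simp [he, MeasurableEquiv.piFinSuccAbove]; rfl
      · have := hk j (fun h => hj (by rw [h]))
        exact this
    have hdiff0 : ∀ x x' y, ∃ k, ∀ j, j ≠ k → (e (x, y)) j = (e (x', y)) j := by
      intro x x' y
      refine ⟨0, fun j hj => ?_⟩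
      refine Fin.cases (fun h => (h rfl).elim) (fun j hj => ?_) j hj
      simp [he, MeasurableEquiv.piFinSuccAbove]; rfl
    set Y : Ω 0 → ℝ := fun x => ∫ y, X (e (x, y)) ∂ν with hY
    have hint : Integrable (fun p => X (e p)) ((μ 0).prod ν) :=
      Integrable.of_bound hXe.aestronglyMeasurable M (Filter.Eventually.of_forall fun p => hM _)
    have hints : ∀ x, Integrable (fun y => X (e (x, y))) ν := fun x =>
      Integrable.of_bound (hsec x).aestronglyMeasurable M (Filter.Eventually.of_forall fun p => hM _)
    have hE1 : E = ∫ p, X (e p) ∂((μ 0).prod ν) := (hmp.integral_comp' X).symm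
    have hE2 : E = ∫ x, Y x ∂(μ 0) := by rw [hE1, integral_prod _ hint]
    have hYm : Measurable Y := hXe.stronglyMeasurable.integral_prod_right'.measurable
    have hBreal : ((μ 0).prod ν).real (e ⁻¹' B) = (Measure.pi μ).real B := by
      simp only [Measure.real]; rw [hmp.measure_preimage_equiv]
    have hYb : ∀ x, |Y x - E| ≤ c + b * α := by
      intro x
      have e1 : Y x = ∫ p, X (e (x, p.2)) ∂((μ 0).prod ν) := by
        rw [integral_fun_snd (fun y => X (e (x, y)))]; simp [hY]
      have i1 : Integrable (fun p : Ω 0 × _ => X (e (x, p.2))) ((μ 0).prod ν) :=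
        (hints x).comp_snd _
      rw [e1, hE1, ← integral_sub i1 hint]
      have i2 : Integrable (fun p => c + b * (e ⁻¹' B).indicator (fun _ => (1:ℝ)) p) ((μ 0).prod ν) :=
        (integrable_const _).add (((integrable_const _).indicator hBe).const_mul _)
      calc _ = ‖∫ p, (X (e (x, p.2)) - X (e p)) ∂((μ 0).prod ν)‖ := rfl
        _ ≤ ∫ p, (c + b * (e ⁻¹' B).indicator (fun _ => (1:ℝ)) p) ∂((μ 0).prod ν) := by
          apply norm_integral_le_of_norm_le i2
          refine Filter.Eventually.of_forall fun p => ?_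
          rw [Real.norm_eq_abs, abs_sub_comm]
          by_cases hp : e p ∈ B
          · have := h2 (e p) (e (x, p.2)) (hdiff0 _ _ _)
            simp only [Set.indicator, Set.mem_preimage, hp, if_true]; linarith
          · have := h1 (e p) (e (x, p.2)) (hdiff0 _ _ _) hp
            simp only [Set.indicator, Set.mem_preimage, hp, if_false]; linarith
        _ = c + b * (Measure.pi μ).real B := by
          rw [integral_add (integrable_const _) (((integrable_const _).indicator hBe).const_mul _),
            integral_const_mul, integral_indicator hBe]
          rw [integral_const, integral_const, probReal_univ, measureReal_restrict_apply_univ, hBreal,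
            one_smul, smul_eq_mul, mul_one]
        _ ≤ _ := by gcongr
    -- Hoeffding
    have hH := ProbabilityTheory.hasSubgaussianMGF_of_mem_Icc (X := fun x => Y x - E) (μ := μ 0)
      (a := -(c + b * α)) (b := c + b * α) (hYm.sub_const _).aemeasurable
      (Filter.Eventually.of_forall fun x => abs_le.1 (hYb x))
    have hYint : Integrable Y (μ 0) := hint.integral_prod_left
    have hE3 : ∫ x, (Y x - E) ∂(μ 0) = 0 := by
      rw [integral_sub hYint (integrable_const _)]; simp [← hE2]
    have hmgf := hH.mgf_le l
    have hexpi := hH.integrable_exp_mul l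
    simp only [hE3, sub_zero, ProbabilityTheory.mgf] at hmgf hexpi
    have hd : 0 ≤ c + b * α := by positivity
    have hmgf' : ∫ x, Real.exp (l * (Y x - E)) ∂(μ 0) ≤ Real.exp (l ^ 2 * (c + b * α) ^ 2 / 2) := by
      refine hmgf.trans (le_of_eq ?_)
      congr 1
      push_cast
      rw [Real.norm_eq_abs, abs_of_nonneg (by linarith)]
      ring
    -- Fubini
    have fub : ∀ S : Set (∀ i, Ω i), MeasurableSet S →
        Integrable (fun x => ν.real {y | e (x, y) ∈ S}) (μ 0) ∧
        (Measure.pi μ).real S = ∫ x, ν.real {y | e (x, y) ∈ S} ∂(μ 0) := by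
      intro S hS
      have hSe : MeasurableSet (e ⁻¹' S) := e.measurable hS
      have m1 : Measurable (fun x => ν {y | e (x, y) ∈ S}) := measurable_measure_prodMk_left hSe
      constructor
      · exact Integrable.of_bound m1.ennreal_toReal.aestronglyMeasurable 1
          (Filter.Eventually.of_forall fun x => by
            rw [Real.norm_eq_abs, abs_of_nonneg measureReal_nonneg]; exact measureReal_le_one)
      · simp only [Measure.real]
        rw [integral_toReal m1.aemeasurable (Filter.Eventually.of_forall fun x => measure_lt_top _ _),
          ← hmp.measure_preimage_equiv, Measure.prod_apply hSe]
        rfl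
    have hS : MeasurableSet {ω | t < X ω - E} := measurableSet_lt measurable_const (hX.sub_const _)
    obtain ⟨f1, f2⟩ := fub _ hS
    obtain ⟨g1, g2⟩ := fub _ hB
    set K := Real.exp (n * (l ^ 2 * (c + b * α) ^ 2 / 2) - l * t) with hK
    have key : ∀ x, ν.real {y | e (x, y) ∈ {ω | t < X ω - E}} ≤
        K * Real.exp (l * (Y x - E)) + n * (ν.real {y | e (x, y) ∈ B} / α) := by
      intro x
      have := ih (fun j => Ω (Fin.succAbove 0 j)) (fun j => μ (Fin.succAbove 0 j))
        (fun y => X (e (x, y))) (hsec x) (fun y => hM _) {y | e (x, y) ∈ B}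
        (measurable_prodMk_left hBe)
        (fun y y' h hy => h1 _ _ (hdiff x y y' h) hy) (fun y y' h => h2 _ _ (hdiff x y y' h))
        (t - (Y x - E))
      rw [hK, ← Real.exp_add]
      convert this using 3
      · congr 1; ext y; simp only [Set.mem_ofPred_eq]; 
        constructor <;> intro h <;> simp only [hY] at * <;> linarith
      · ring
    rw [f2]
    calc _ ≤ ∫ x, (K * Real.exp (l * (Y x - E)) + n * (ν.real {y | e (x, y) ∈ B} / α)) ∂(μ 0) :=
          integral_mono f1 ((hexpi.const_mul _).add ((g1.div_const _).const_mul _)) key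
      _ = K * ∫ x, Real.exp (l * (Y x - E)) ∂(μ 0) + n * ((Measure.pi μ).real B / α) := by
          rw [integral_add (hexpi.const_mul _) ((g1.div_const _).const_mul _), integral_const_mul,
            integral_const_mul, integral_div, g2]
      _ ≤ K * Real.exp (l ^ 2 * (c + b * α) ^ 2 / 2) + (n + 1 : ℕ) * ((Measure.pi μ).real B / α) := by
          gcongr
          · omega
      _ = _ := by
          rw [hK, ← Real.exp_add]; congr 2; push_cast; ring

theorem bdd_aux {n : ℕ} (Ω : Fin n → Type u) (X : (∀ i, Ω i) → ℝ) (b : ℝ)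
    (h2 : ∀ ω ω' : ∀ i, Ω i, (∃ k, ∀ j, j ≠ k → ω j = ω' j) → |X ω - X ω'| ≤ b)
    (ω ω' : ∀ i, Ω i) : |X ω - X ω'| ≤ n * b := by
  classical
  have : ∀ s : Finset (Fin n), |X (s.piecewise ω ω') - X ω'| ≤ s.card * b := by
    intro s
    induction s using Finset.induction_on with
    | empty => simp
    | insert a s ha ih =>
      rw [Finset.card_insert_of_notMem ha, Finset.piecewise_insert]
      have := h2 (Function.update (s.piecewise ω ω') a (ω a)) (s.piecewise ω ω')
        ⟨a, fun j hj => by simp [hj]⟩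
      push_cast
      calc _ ≤ _ := abs_sub_le _ (X (s.piecewise ω ω')) _
        _ ≤ _ := by linarith
  simpa using this Finset.univ

theorem stmt_19 (A : ℝ) (hA : 1 ≤ A) :
    ∃ C : ℝ, 0 < C ∧
      ∀ (m : ℕ), 2 ≤ m →
      ∀ (Ω : Fin m → Type*) [∀ i, MeasurableSpace (Ω i)]
        (μ : ∀ i, Measure (Ω i)) [∀ i, IsProbabilityMeasure (μ i)]
        (X : (∀ i, Ω i) → ℝ), Measurable X →
      ∀ (B : Set (∀ i, Ω i)), MeasurableSet B →
      ∀ b c ς : ℝ, 0 ≤ b → b ≤ m → c = A * Real.sqrt (m * Real.log m) →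
        0 ≤ ς → ς ≤ 1 / (m : ℝ) ^ 3 →
      Measure.pi μ B = ENNReal.ofReal ς →
      (∀ ω ω' : ∀ i, Ω i, (∃ k, ∀ j, j ≠ k → ω j = ω' j) → ω ∉ B →
        |X ω - X ω'| ≤ c) →
      (∀ ω ω' : ∀ i, Ω i, (∃ k, ∀ j, j ≠ k → ω j = ω' j) → |X ω - X ω'| ≤ b) →
      Measure.pi μ {ω | C * m * Real.log m < |X ω - ∫ x, X x ∂(Measure.pi μ)|}
        ≤ ENNReal.ofReal (4 / (m : ℝ)) := by
  refine ⟨4 * A, by linarith, ?_⟩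
  intro m hm Ω _ μ _ X hX B hB b c ς hb hbm hc hς hς3 hμB h1 h2
  have hm2 : (2:ℝ) ≤ m := by exact_mod_cast hm
  have hm0 : (0:ℝ) < m := by linarith
  have hA0 : 0 < A := by linarith
  have hlog : 1 / 2 ≤ Real.log m :=
    le_trans (by linarith [Real.log_two_gt_d9]) (Real.log_le_log (by norm_num) hm2)
  have hml : 1 ≤ m * Real.log m := by nlinarith
  have hs1 : 1 ≤ Real.sqrt (m * Real.log m) := Real.one_le_sqrt.2 hml
  have hc1 : 1 ≤ c := by rw [hc]; nlinarith
  have hc2 : c ^ 2 = A ^ 2 * (m * Real.log m) := by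
    rw [hc, mul_pow, Real.sq_sqrt (by linarith)]
  obtain ⟨ω0⟩ : Nonempty (∀ i, Ω i) := nonempty_of_isProbabilityMeasure (Measure.pi μ)
  have hbd : ∀ ω, |X ω| ≤ m * b + |X ω0| := fun ω => by
    have := bdd_aux Ω X b h2 ω ω0
    have := abs_sub_abs_le_abs_sub (X ω) (X ω0)
    linarith
  have hBr : (Measure.pi μ).real B = ς := by
    rw [Measure.real, hμB, ENNReal.toReal_ofReal hς]
  set t := 4 * A * m * Real.log m with ht
  have hfin : Real.exp (m * ((1 / (A * m)) ^ 2 * (c + b * (1 / m)) ^ 2 / 2) - 1 / (A * m) * t)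
      + m * (ς / (1 / m)) ≤ 2 / m := by
    have hd : c + b * (1 / m) ≤ 2 * c := by
      have : b * (1 / m) ≤ 1 := by rw [mul_one_div, div_le_one hm0]; exact hbm
      linarith
    have e1 : m * ((1 / (A * m)) ^ 2 * (c + b * (1 / m)) ^ 2 / 2) - 1 / (A * m) * t
        ≤ - Real.log m := by
      calc _ ≤ m * ((1 / (A * m)) ^ 2 * (2 * c) ^ 2 / 2) - 1 / (A * m) * t := by gcongr
        _ = - (2 * Real.log m) := by
          rw [mul_pow, hc2, ht]; field_simp; ring
        _ ≤ _ := by linarith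
    have e2 := Real.exp_le_exp.2 e1
    rw [Real.exp_neg, Real.exp_log hm0] at e2
    have e3 : m * (ς / (1 / m)) ≤ 1 / (m:ℝ) := by
      calc m * (ς / (1 / m)) ≤ m * ((1 / (m:ℝ) ^ 3) / (1 / m)) := by gcongr
        _ = _ := by field_simp
    calc _ ≤ (m:ℝ)⁻¹ + 1 / m := add_le_add e2 e3
      _ = _ := by field_simp; norm_num
  have p1 := tail_aux b c (1 / m) (1 / (A * m)) hb (by linarith) (by positivity) (by positivity) _
    m Ω μ X hX hbd B hB h1 h2 t
  have p2 := tail_aux b c (1 / m) (1 / (A * m)) hb (by linarith) (by positivity) (by positivity) _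
    m Ω μ (fun ω => - X ω) hX.neg (fun ω => by rw [abs_neg]; exact hbd ω) B hB
    (fun ω ω' h h' => by rw [neg_sub_neg, abs_sub_comm]; exact h1 ω ω' h h')
    (fun ω ω' h => by rw [neg_sub_neg, abs_sub_comm]; exact h2 ω ω' h) t
  rw [hBr] at p1 p2
  rw [integral_neg] at p2
  rw [ENNReal.le_ofReal_iff_toReal_le (measure_ne_top _ _) (by positivity)]
  change (Measure.pi μ).real _ ≤ _
  calc _ ≤ (Measure.pi μ).real ({ω | t < X ω - ∫ x, X x ∂(Measure.pi μ)} ∪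
        {ω | t < - X ω - - ∫ x, X x ∂(Measure.pi μ)}) := by
        refine measureReal_mono (fun ω hω => ?_)
        simp only [Set.mem_ofPred_eq, Set.mem_union] at *
        rcases lt_abs.1 hω with h | h
        · exact Or.inl h
        · right; linarith
    _ ≤ _ := measureReal_union_le _ _
    _ ≤ 2 / m + 2 / m := add_le_add (p1.trans hfin) (p2.trans hfin)
    _ = _ := by ring
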